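/- Let α, β ≥ 0 be real numbers. Then there exists a constant C > 0 such that for every nonzero n ∈ ℤ³, the sum of ⟨n₁⟩^{-2α} ⟨n − n₁⟩^{-2β} over all n₁ ∈ ℤ³ satisfying |n|/2 ≤ |n₁| ≤ 2|n| and |n − n₁| ≥ |n|/2 is at most C ⟨n⟩^{3 − 2α − 2β}. -/

import Mathlib

/-!
On the resonant region `|n|/2 ≤ |m| ≤ 2|n|`, `|n - m| ≥ |n|/2`, the three brackets `⟨n⟩`, `⟨m⟩` and
`⟨n - m⟩` agree up to a factor of at most `3`. Hence, for exponents of either sign, each summand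
`⟨m⟩^s ⟨n - m⟩^t` is comparable to `⟨n⟩^(s + t)`, and a lattice of rank `d` has `O(⟨n⟩^d)` points of
size at most `2|n|`.
-/

/-- Euclidean norm of a lattice point `n ∈ ℤ³`. -/
noncomputable def znorm (n : Fin 3 → ℤ) : ℝ := Real.sqrt (∑ i, ((n i : ℝ)) ^ 2)

/-- Japanese bracket `⟨n⟩ = (1 + |n|²)^{1/2}` of a lattice point `n ∈ ℤ³`. -/
noncomputable def jb (n : Fin 3 → ℤ) : ℝ := Real.sqrt (1 + ∑ i, ((n i : ℝ)) ^ 2)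

open Metric
open WithLp (toLp ofLp)

theorem rpow_le_rpow_abs_mul_rpow {K x y : ℝ} (hx : 0 < x) (hy : 0 < y) (hxy : x ≤ K * y)
    (hyx : y ≤ K * x) (s : ℝ) : y ^ s ≤ K ^ |s| * x ^ s := by
  have hK : 0 < K := pos_of_mul_pos_left (hx.trans_le hxy) hy.le
  rcases le_total 0 s with hs | hs
  · calc y ^ s ≤ (K * x) ^ s := Real.rpow_le_rpow hy.le hyx hs
      _ = K ^ |s| * x ^ s := by rw [Real.mul_rpow hK.le hx.le, abs_of_nonneg hs]
  · calc y ^ s ≤ (K⁻¹ * x) ^ s :=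
          Real.rpow_le_rpow_of_nonpos (by positivity) ((inv_mul_le_iff₀ hK).2 hxy) hs
      _ = K ^ |s| * x ^ s := by
          rw [Real.mul_rpow (inv_nonneg.2 hK.le) hx.le, Real.inv_rpow hK.le, abs_of_nonpos hs,
            Real.rpow_neg hK.le]

theorem tsum_subtype_le_ncard_mul {ι : Type*} {A : Set ι} (hA : A.Finite) {f : ι → ℝ} {B : ℝ}
    (hf : ∀ a ∈ A, f a ≤ B) : ∑' a : A, f a ≤ A.ncard * B := by
  have := hA.fintype
  rw [tsum_fintype, ← Nat.card_coe_set_eq, Nat.card_eq_fintype_card, ← nsmul_eq_mul]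
  exact Finset.sum_le_card_nsmul _ _ _ fun a _ ↦ hf a a.2

section JapaneseBracket

variable {E : Type*} [SeminormedAddCommGroup E]

/-- The Japanese bracket `⟨x⟩ = (1 + ‖x‖²)^{1/2}`, a substitute for `‖x‖` that is bounded below
by `1`. -/
noncomputable def japaneseBracket (x : E) : ℝ := √(1 + ‖x‖ ^ 2)

theorem one_le_japaneseBracket (x : E) : 1 ≤ japaneseBracket x :=
  Real.one_le_sqrt.2 (le_add_of_nonneg_right (sq_nonneg _))

theorem japaneseBracket_pos (x : E) : 0 < japaneseBracket x :=
  one_pos.trans_le (one_le_japaneseBracket x)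

theorem norm_le_japaneseBracket (x : E) : ‖x‖ ≤ japaneseBracket x :=
  Real.le_sqrt_of_sq_le (le_add_of_nonneg_left zero_le_one)

theorem japaneseBracket_le_mul {K : ℝ} (hK : 1 ≤ K) {x y : E} (h : ‖x‖ ≤ K * ‖y‖) :
    japaneseBracket x ≤ K * japaneseBracket y := by
  rw [japaneseBracket, japaneseBracket, Real.sqrt_le_left (by positivity), mul_pow,
    Real.sq_sqrt (by positivity), mul_add, mul_one, ← mul_pow]
  gcongr
  exact one_le_pow₀ hK

theorem japaneseBracket_rpow_le_rpow_abs_mul {K : ℝ} (hK : 1 ≤ K) {x y : E} (hxy : ‖x‖ ≤ K * ‖y‖)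
    (hyx : ‖y‖ ≤ K * ‖x‖) (s : ℝ) :
    japaneseBracket y ^ s ≤ K ^ |s| * japaneseBracket x ^ s :=
  rpow_le_rpow_abs_mul_rpow (japaneseBracket_pos x) (japaneseBracket_pos y)
    (japaneseBracket_le_mul hK hxy) (japaneseBracket_le_mul hK hyx) s

/-- The points `x` for which `x`, `n - x` and `n` all have comparable norms. The bound
`‖n - x‖ ≤ 3 * ‖n‖` is left to the triangle inequality. -/
def resonantRegion (n : E) : Set E :=
  {x | ‖n‖ / 2 ≤ ‖x‖ ∧ ‖x‖ ≤ 2 * ‖n‖ ∧ ‖n‖ / 2 ≤ ‖n - x‖}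

theorem japaneseBracket_rpow_mul_le_of_mem_resonantRegion {n x : E} (hx : x ∈ resonantRegion n)
    (s t : ℝ) :
    japaneseBracket x ^ s * japaneseBracket (n - x) ^ t ≤
      2 ^ |s| * 3 ^ |t| * japaneseBracket n ^ (s + t) := by
  obtain ⟨h_lower, h_upper, h_sub⟩ := hx
  have h_sub_upper : ‖n - x‖ ≤ 3 * ‖n‖ := by linarith [norm_sub_le n x]
  have hs : japaneseBracket x ^ s ≤ 2 ^ |s| * japaneseBracket n ^ s :=
    japaneseBracket_rpow_le_rpow_abs_mul one_le_two (by linarith) h_upper s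
  have ht : japaneseBracket (n - x) ^ t ≤ 3 ^ |t| * japaneseBracket n ^ t :=
    japaneseBracket_rpow_le_rpow_abs_mul (by norm_num) (by linarith [norm_nonneg n]) h_sub_upper t
  calc
    _ ≤ 2 ^ |s| * japaneseBracket n ^ s * (3 ^ |t| * japaneseBracket n ^ t) :=
      mul_le_mul hs ht (Real.rpow_nonneg (japaneseBracket_pos _).le t)
        (mul_nonneg (by positivity) (Real.rpow_nonneg (japaneseBracket_pos n).le s))
    _ = 2 ^ |s| * 3 ^ |t| * japaneseBracket n ^ (s + t) := by
      rw [Real.rpow_add (japaneseBracket_pos n)]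
      ring

end JapaneseBracket

section IntegerLattice

variable {ι : Type*} [Fintype ι]

theorem ncard_closedBall_pi_int (c : ι → ℤ) {R : ℝ} (hR : 0 ≤ R) :
    (closedBall c R).ncard = (2 * ⌊R⌋₊ + 1) ^ Fintype.card ι := by
  classical
  have h_box : closedBall c R =
      Finset.Icc (fun i ↦ c i - (⌊R⌋₊ : ℤ)) (fun i ↦ c i + (⌊R⌋₊ : ℤ)) := by
    rw [closedBall_pi c hR, Finset.coe_Icc, ← Set.pi_univ_Icc]
    simp only [Int.closedBall_eq_Icc, sub_eq_add_neg, Int.ceil_intCast_add, Int.ceil_neg,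
      Int.floor_intCast_add, Int.natCast_floor_eq_floor hR]
  have h_side (i : ι) : (c i + (⌊R⌋₊ : ℤ) + 1 - (c i - (⌊R⌋₊ : ℤ))).toNat = 2 * ⌊R⌋₊ + 1 := by
    lia
  simp only [h_box, Set.ncard_coe_finset, Pi.card_Icc, Int.card_Icc, h_side, Finset.prod_const,
    Finset.card_univ]

theorem norm_ofLp_le {p : ENNReal} [Fact (1 ≤ p)] {β : ι → Type*}
    [∀ i, SeminormedAddCommGroup (β i)] (x : PiLp p β) : ‖ofLp x‖ ≤ ‖x‖ :=
  (pi_norm_le_iff_of_nonneg (norm_nonneg x)).2 (PiLp.norm_apply_le x)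

theorem preimage_toLp_resonantRegion_subset (n : ι → ℤ) :
    toLp 2 ⁻¹' resonantRegion (toLp 2 n) ⊆ closedBall 0 (2 * ‖toLp 2 n‖) := fun m hm ↦
  mem_closedBall_zero_iff.2 ((norm_ofLp_le (toLp 2 m)).trans hm.2.1)

theorem finite_preimage_toLp_resonantRegion (n : ι → ℤ) :
    (toLp 2 ⁻¹' resonantRegion (toLp 2 n)).Finite :=
  (isCompact_closedBall _ _).finite_of_discrete.subset (preimage_toLp_resonantRegion_subset n)

theorem ncard_preimage_toLp_resonantRegion_le (n : ι → ℤ) :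
    ((toLp 2 ⁻¹' resonantRegion (toLp 2 n)).ncard : ℝ) ≤
      (5 * japaneseBracket (toLp 2 n)) ^ Fintype.card ι := by
  have hR : 0 ≤ 2 * ‖toLp 2 n‖ := by positivity
  calc
    _ ≤ ((closedBall (0 : ι → ℤ) (2 * ‖toLp 2 n‖)).ncard : ℝ) := by
      exact_mod_cast Set.ncard_le_ncard (preimage_toLp_resonantRegion_subset n)
        (isCompact_closedBall _ _).finite_of_discrete
    _ = (2 * ⌊2 * ‖toLp 2 n‖⌋₊ + 1) ^ Fintype.card ι := by
      exact_mod_cast ncard_closedBall_pi_int 0 hR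
    _ ≤ (5 * japaneseBracket (toLp 2 n)) ^ Fintype.card ι := by
      gcongr
      linarith [Nat.floor_le hR, norm_le_japaneseBracket (toLp 2 n),
        one_le_japaneseBracket (toLp 2 n)]

theorem convolution_resonant_region_general (s t : ℝ) :
    ∃ C > 0, ∀ n : ι → ℤ,
      ∑' m : toLp 2 ⁻¹' resonantRegion (toLp 2 n),
        japaneseBracket (toLp 2 m.1) ^ s * japaneseBracket (toLp 2 (n - m.1)) ^ t
      ≤ C * japaneseBracket (toLp 2 n) ^ (Fintype.card ι + s + t) := by
  refine ⟨5 ^ Fintype.card ι * (2 ^ |s| * 3 ^ |t|), by positivity, fun n ↦ ?_⟩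
  have h_pos := japaneseBracket_pos (toLp 2 n)
  calc
    _ ≤ (toLp 2 ⁻¹' resonantRegion (toLp 2 n)).ncard *
          (2 ^ |s| * 3 ^ |t| * japaneseBracket (toLp 2 n) ^ (s + t)) :=
      tsum_subtype_le_ncard_mul (finite_preimage_toLp_resonantRegion n)
        (f := fun m ↦ japaneseBracket (toLp 2 m) ^ s * japaneseBracket (toLp 2 (n - m)) ^ t)
        fun _ hm ↦ japaneseBracket_rpow_mul_le_of_mem_resonantRegion hm s t
    _ ≤ (5 * japaneseBracket (toLp 2 n)) ^ Fintype.card ι *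
          (2 ^ |s| * 3 ^ |t| * japaneseBracket (toLp 2 n) ^ (s + t)) := by
      gcongr
      exact ncard_preimage_toLp_resonantRegion_le n
    _ = 5 ^ Fintype.card ι * (2 ^ |s| * 3 ^ |t|) *
          japaneseBracket (toLp 2 n) ^ (Fintype.card ι + s + t) := by
      rw [add_assoc, Real.rpow_add h_pos (Fintype.card ι), Real.rpow_natCast, mul_pow]
      ring

end IntegerLattice

theorem znorm_eq_norm_toLp : znorm = fun n ↦ ‖toLp 2 n‖ := by
  ext n
  simp [znorm, PiLp.norm_eq_of_L2, Int.norm_eq_abs]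

theorem jb_eq_japaneseBracket_toLp : jb = fun n ↦ japaneseBracket (toLp 2 n) := by
  ext n
  simp [jb, japaneseBracket, PiLp.norm_sq_eq_of_L2, Int.norm_eq_abs]

theorem convolution_resonant_region (α β : ℝ) (hα : 0 ≤ α) (hβ : 0 ≤ β) :
    ∃ C > 0, ∀ n : Fin 3 → ℤ, n ≠ 0 →
      ∑' n₁ : {m : Fin 3 → ℤ //
          znorm n / 2 ≤ znorm m ∧ znorm m ≤ 2 * znorm n ∧ znorm n / 2 ≤ znorm (n - m)},
        jb n₁.1 ^ (-(2 * α)) * jb (n - n₁.1) ^ (-(2 * β))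
      ≤ C * jb n ^ (3 - 2 * α - 2 * β) := by
  obtain ⟨C, hC, h⟩ := convolution_resonant_region_general (ι := Fin 3) (-(2 * α)) (-(2 * β))
  rw [znorm_eq_norm_toLp, jb_eq_japaneseBracket_toLp]
  exact ⟨C, hC, fun n _ ↦ by simpa [sub_eq_add_neg] using! h n⟩
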